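/- For integers a, b ≥ 0 and ν ≥ k ≥ 1, the cardinality of the set of k-tuples ((i_1,ℓ_1),…,(i_k,ℓ_k)) with i_t ≥ 1, Σ i_t = ν, and 1 ≤ ℓ_t ≤ a·i_t + b for each t, equals Σ_{j=0}^{k} a^j b^{k-j} C(k,j) C(ν+j-1, ν-k). -/

import Mathlib

/-! The generating function of the colored parts of a single composition is
`W = ∑_{i ≥ 1} (a i + b) Xⁱ = X (a G² + b G)`, where `G = ∑ Xⁿ = 1 / (1 - X)`.
Choosing the sizes first and then the colors, the number of colored compositions of `ν` with `k`
parts is the sum over size vectors of the product of the numbers of colors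
(`card_eq_sum_prod`), which is the coefficient of `X ^ ν` in `W ^ k`. The binomial theorem gives
`W ^ k = X ^ k ∑_j C(k,j) a^j b^{k-j} G^{k+j}`, and the coefficient of `X ^ (ν - k)` in `G^{k+j}` is
`C(ν+j-1, k+j-1) = C(ν+j-1, ν-k)` (`coeff_colorSeries_pow`). -/

open Finset

/-- The number of colors available to a part of size `i`; a part of size `0` is not allowed, and
accordingly gets no color. -/
def numColors (a b i : ℕ) : ℕ := if i = 0 then 0 else a * i + b

/-- The generating function of a single colored part, in closed form `X (a G² + b G)` with
`G = 1 / (1 - X)`. Coefficients are taken in `ℤ`, since the expansion of the powers of `G` is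
available over commutative rings. -/
noncomputable def colorSeries (a b : ℕ) : PowerSeries ℤ :=
  PowerSeries.X *
    (PowerSeries.C (a : ℤ) * PowerSeries.mk 1 ^ 2 + PowerSeries.C (b : ℤ) * PowerSeries.mk 1)

lemma coeff_colorSeries (a b i : ℕ) :
    PowerSeries.coeff i (colorSeries a b) = (numColors a b i : ℤ) := by
  cases i with
  | zero => simp [colorSeries, numColors]
  | succ n =>
    rw [colorSeries, PowerSeries.coeff_succ_X_mul,
      PowerSeries.mk_one_pow_eq_mk_choose_add ℤ 1, map_add, PowerSeries.coeff_C_mul,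
      PowerSeries.coeff_C_mul, PowerSeries.coeff_mk, PowerSeries.coeff_mk]
    simp only [numColors, Nat.choose_one_right, Pi.one_apply, Nat.succ_ne_zero, if_false]
    push_cast
    ring

lemma coeff_colorSeries_pow (a b ν k : ℕ) (hk : 1 ≤ k) (hν : k ≤ ν) :
    PowerSeries.coeff ν (colorSeries a b ^ k) =
      ((∑ j ∈ Finset.range (k + 1),
        a ^ j * b ^ (k - j) * Nat.choose k j * Nat.choose (ν + j - 1) (ν - k) : ℕ) : ℤ) := by
  rw [colorSeries, mul_pow, PowerSeries.coeff_X_pow_mul', if_pos hν, add_pow, map_sum]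
  push_cast
  refine Finset.sum_congr rfl fun j hj => ?_
  have hj' : j ≤ k := by simpa [Nat.lt_succ_iff] using hj
  have hterm : (PowerSeries.C (a : ℤ) * PowerSeries.mk 1 ^ 2) ^ j *
      (PowerSeries.C (b : ℤ) * PowerSeries.mk 1) ^ (k - j) * (k.choose j : PowerSeries ℤ) =
      PowerSeries.C ((a : ℤ) ^ j * (b : ℤ) ^ (k - j) * (k.choose j : ℤ)) *
        PowerSeries.mk 1 ^ ((k + j - 1) + 1) := by
    have e : (k + j - 1) + 1 = 2 * j + (k - j) := by omega
    rw [e, pow_add, pow_mul, mul_pow, mul_pow]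
    simp only [map_mul, map_pow, map_natCast]
    ring
  rw [hterm, PowerSeries.mk_one_pow_eq_mk_choose_add, PowerSeries.coeff_C_mul,
    PowerSeries.coeff_mk]
  have e : k + j - 1 + (ν - k) = ν + j - 1 := by omega
  rw [e, Nat.choose_symm_of_eq_add (show ν + j - 1 = (k + j - 1) + (ν - k) by omega)]

/-- Colored compositions are counted by choosing the vector of sizes first and then a color for
each part. -/
lemma card_eq_sum_prod (a b ν k : ℕ) :
    Nat.card {f : Fin k → ℕ × ℕ //
        (∀ t, 1 ≤ (f t).1) ∧ (∑ t, (f t).1) = ν ∧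
        (∀ t, 1 ≤ (f t).2 ∧ (f t).2 ≤ a * (f t).1 + b)} =
      ∑ l ∈ finsuppAntidiag (univ : Finset (Fin k)) ν, ∏ t, numColors a b (l t) := by
  let S : Finset (Σ _ : Fin k →₀ ℕ, Fin k → ℕ) :=
    (finsuppAntidiag (univ : Finset (Fin k)) ν).sigma fun l =>
      Fintype.piFinset fun t => if l t = 0 then ∅ else Icc 1 (a * l t + b)
  have hS : S.card = ∑ l ∈ finsuppAntidiag (univ : Finset (Fin k)) ν,
      ∏ t, numColors a b (l t) := by
    rw [Finset.card_sigma]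
    refine Finset.sum_congr rfl fun l _ => ?_
    rw [Fintype.card_piFinset]
    refine Finset.prod_congr rfl fun t _ => ?_
    unfold numColors
    split_ifs <;> simp
  have memS : ∀ p : (Σ _ : Fin k →₀ ℕ, Fin k → ℕ), p ∈ S ↔
      (∀ t, 1 ≤ p.1 t) ∧ (∑ t, p.1 t) = ν ∧
        (∀ t, 1 ≤ p.2 t ∧ p.2 t ≤ a * p.1 t + b) := by
    rintro ⟨l, c⟩
    have hcolor : ∀ t, (c t ∈ if l t = 0 then (∅ : Finset ℕ) else Icc 1 (a * l t + b)) ↔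
        1 ≤ l t ∧ 1 ≤ c t ∧ c t ≤ a * l t + b := by
      intro t
      split_ifs with h
      · simp [h]
      · simp [Nat.one_le_iff_ne_zero, h]
    simp only [S, Finset.mem_sigma, mem_finsuppAntidiag, Fintype.mem_piFinset, hcolor,
      subset_univ, and_true, forall_and]
    tauto
  rw [← hS, ← Nat.card_eq_finsetCard]
  refine Nat.card_congr
    { toFun := fun f => ⟨⟨Finsupp.equivFunOnFinite.symm fun t => (f.1 t).1, fun t => (f.1 t).2⟩,
        (memS _).2 f.2⟩
      invFun := fun p => ⟨fun t => (p.1.1 t, p.1.2 t), (memS _).1 p.2⟩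
      left_inv := fun f => rfl
      right_inv := ?_ }
  rintro ⟨⟨l, c⟩, h⟩
  apply Subtype.ext
  simp only [Sigma.mk.injEq, heq_eq_eq, and_true]
  ext t
  rfl

/-- The number of `(an+b)`-color compositions of `ν` with `k` parts, i.e. `k`-tuples
`((i₁,ℓ₁),…,(i_k,ℓ_k))` with `iₜ ≥ 1`, `Σ iₜ = ν` and `1 ≤ ℓₜ ≤ a·iₜ + b`, equals
`Σ_{j=0}^{k} aʲ b^{k-j} C(k,j) C(ν+j-1, ν-k)`. -/
theorem card_color_compositions_enum (a b ν k : ℕ) (hk : 1 ≤ k) (hν : k ≤ ν) :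
    Nat.card {f : Fin k → ℕ × ℕ //
        (∀ t, 1 ≤ (f t).1) ∧ (∑ t, (f t).1) = ν ∧
        (∀ t, 1 ≤ (f t).2 ∧ (f t).2 ≤ a * (f t).1 + b)} =
      ∑ j ∈ Finset.range (k + 1),
        a ^ j * b ^ (k - j) * Nat.choose k j * Nat.choose (ν + j - 1) (ν - k) := by
  have h : ((Nat.card {f : Fin k → ℕ × ℕ //
        (∀ t, 1 ≤ (f t).1) ∧ (∑ t, (f t).1) = ν ∧
        (∀ t, 1 ≤ (f t).2 ∧ (f t).2 ≤ a * (f t).1 + b)} : ℕ) : ℤ) =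
      PowerSeries.coeff ν (colorSeries a b ^ k) := by
    rw [card_eq_sum_prod, ← Fin.prod_const, PowerSeries.coeff_prod]
    simp only [coeff_colorSeries]
    push_cast
    rfl
  rw [coeff_colorSeries_pow a b ν k hk hν] at h
  exact_mod_cast h
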